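/- There exists an absolute constant K such that for every continuous strictly convex function f : ℝ → ℝ and every finite set A ⊂ ℝ with |A| ≥ 2, one has max(|f(A)+f(A)|, |A+A|) ≥ K · |A|^{24/19} / (log|A|)^{2/19}. -/

import Mathlib

open Finset Pointwise

noncomputable def dlt (X Y : Finset ℝ) (s : ℝ) : ℕ :=
  ((X ×ˢ Y).filter (fun p => p.1 - p.2 = s)).card

noncomputable def sg (X Y : Finset ℝ) (s : ℝ) : ℕ :=
  ((X ×ˢ Y).filter (fun p => p.1 + p.2 = s)).card

noncomputable def En (X Y : Finset ℝ) : ℝ :=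
  ∑ s ∈ X - X, (dlt X X s : ℝ) * (dlt Y Y s : ℝ)

noncomputable def E3 (X : Finset ℝ) : ℝ :=
  ∑ s ∈ X - X, (dlt X X s : ℝ) ^ 3

noncomputable def E15 (X : Finset ℝ) : ℝ :=
  ∑ s ∈ X - X, (dlt X X s : ℝ) ^ ((3 : ℝ) / 2)

/-!
Fix `C` and cut the grid `(A + B) × (f(A) + C)` into `t × t` blocks. A translate by `(b, c)`, with
`b ∈ B` and `c ∈ C`, of the graph of a monotone `f` over `A` meets at most `2t` blocks. By strict
convexity two points lie on at most one translate, and few pairs of grid points share a block.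
Counting incidences with the best `t` therefore shows that `O(|f(A) + C|² |B|² / (|C| k³))` sums
have `k` or more representations in `A + B`. With `B = -A` this controls the third moment energy
`E₃(A)`, and with `B = A + A` it controls the energy `E(A, A + A)`.

Conversely, the Katz–Koester inclusion and the Cauchy–Schwarz inequality bound `|A|² E(A)³` by a
multiple of `E(A, A + A) E₃(A)`, while `E(A) ≥ |A|⁴ / |A + A|`. Together these estimates yield
`|A|¹⁹ |C|⁵ ≪ |f(A) + C|¹⁰ |A + A|⁹ log² |A|`. A strictly convex function is monotone on at least
half of `A`, so the same holds for it, and `C = f(A)` gives the exponents `24/19` and `2/19`.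
-/

open scoped Combinatorics.Additive

section CubicDecay

variable {ι : Type*} {T : Finset ι} {g : ι → ℕ} {D : ℝ}

/-- The weak `ℓ³` bound on `T`: at most `D / k ^ 3` elements of `T` have a value of `g` that is at
least `k`. It is applied to representation functions of sumsets, the bound on the number of popular
sums that incidence geometry provides. -/
def HasCubicDecay (T : Finset ι) (g : ι → ℕ) (D : ℝ) : Prop :=
  ∀ k : ℕ, 0 < k → (#{s ∈ T | k ≤ g s} : ℝ) * (k : ℝ) ^ 3 ≤ D

lemma sum_sum_Ioc_eq_sum_mul_card (w : ℕ → ℝ) (m : ℕ) {L : ℕ} (hL : ∀ s ∈ T, g s ≤ L) :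
    ∑ s ∈ T, ∑ k ∈ Ioc m (g s), w k = ∑ k ∈ Ioc m L, w k * #{s ∈ T | k ≤ g s} := by
  rw [sum_comm' (t' := Ioc m L) (s' := fun k => {s ∈ T | k ≤ g s})]
  · simp only [sum_const, nsmul_eq_mul, mul_comm]
  · intro s k
    have := hL s
    simp only [mem_Ioc, mem_filter]
    grind

lemma sq_le_sq_add_sum_Ioc {m n : ℕ} (hmn : m ≤ n) :
    (n : ℝ) ^ 2 ≤ (m : ℝ) ^ 2 + ∑ k ∈ Ioc m n, 2 * (k : ℝ) := by
  induction n, hmn using Nat.le_induction with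
  | base => simp
  | succ n hn ih =>
    rw [sum_Ioc_succ_top hn]
    push_cast
    linarith

lemma cube_le_sum_Ioc (n : ℕ) : (n : ℝ) ^ 3 ≤ ∑ k ∈ Ioc 0 n, 3 * (k : ℝ) ^ 2 := by
  induction n with
  | zero => simp
  | succ n ih =>
    rw [sum_Ioc_succ_top n.zero_le]
    push_cast
    nlinarith [n.cast_nonneg (α := ℝ)]

lemma sum_Ioc_inv_sq_le_inv {m : ℕ} (hm : 0 < m) (n : ℕ) :
    ∑ k ∈ Ioc m n, ((k : ℝ) ^ 2)⁻¹ ≤ (m : ℝ)⁻¹ := by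
  rcases le_total m n with h | h
  · exact (sum_Ioc_inv_sq_le_sub hm.ne' h).trans (sub_le_self _ (by positivity))
  · simp [Ioc_eq_empty_of_le h]

namespace HasCubicDecay

lemma nonneg (h : HasCubicDecay T g D) : 0 ≤ D :=
  le_trans (by positivity) (h 1 one_pos)

lemma sum_sq_filter_le (h : HasCubicDecay T g D) {m : ℕ} (hm : 0 < m) :
    ∑ s ∈ T with m ≤ g s, (g s : ℝ) ^ 2 ≤ 3 * D / m := by
  set U := {s ∈ T | m ≤ g s}
  have hcard {k : ℕ} (hk : 0 < k) : (#{s ∈ U | k ≤ g s} : ℝ) ≤ D / (k : ℝ) ^ 3 := by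
    rw [le_div_iff₀ (by positivity)]
    refine le_trans ?_ (h k hk)
    gcongr
    exact filter_subset _ _
  calc ∑ s ∈ U, (g s : ℝ) ^ 2
      ≤ ∑ s ∈ U, ((m : ℝ) ^ 2 + ∑ k ∈ Ioc m (g s), 2 * (k : ℝ)) :=
        sum_le_sum fun s hs => sq_le_sq_add_sum_Ioc (mem_filter.1 hs).2
    _ = (m : ℝ) ^ 2 * #U + ∑ k ∈ Ioc m (U.sup g), 2 * (k : ℝ) * #{s ∈ U | k ≤ g s} := by
        rw [sum_add_distrib, sum_const, nsmul_eq_mul, mul_comm,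
          sum_sum_Ioc_eq_sum_mul_card _ m fun s hs => le_sup hs]
    _ ≤ (m : ℝ) ^ 2 * (D / (m : ℝ) ^ 3) +
          ∑ k ∈ Ioc m (U.sup g), 2 * (k : ℝ) * (D / (k : ℝ) ^ 3) := by
        gcongr with k hk
        · rw [le_div_iff₀ (by positivity)]
          exact h m hm
        · exact hcard (hm.trans (mem_Ioc.1 hk).1)
    _ = D / m + 2 * D * ∑ k ∈ Ioc m (U.sup g), ((k : ℝ) ^ 2)⁻¹ := by
        rw [mul_sum]
        congr 1
        · field_simp
        · refine sum_congr rfl fun k hk => ?_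
          have : k ≠ 0 := (hm.trans (mem_Ioc.1 hk).1).ne'
          field_simp
    _ ≤ D / m + 2 * D * (m : ℝ)⁻¹ := by
        gcongr
        · linarith [h.nonneg]
        · exact sum_Ioc_inv_sq_le_inv hm _
    _ = 3 * D / m := by ring

lemma sum_sq_le (h : HasCubicDecay T g D) : ∑ s ∈ T, (g s : ℝ) ^ 2 ≤ 3 * D := by
  calc ∑ s ∈ T, (g s : ℝ) ^ 2 = ∑ s ∈ T with 1 ≤ g s, (g s : ℝ) ^ 2 := by
        refine (sum_filter_of_ne fun s _ hs => Nat.one_le_iff_ne_zero.2 fun h0 => hs ?_).symm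
        simp [h0]
    _ ≤ 3 * D := by simpa using h.sum_sq_filter_le one_pos

lemma exists_le_two_mul_sum_sq_filter_lt (h : HasCubicDecay T g D) :
    ∃ m : ℕ, m * ∑ s ∈ T, (g s : ℝ) ^ 2 ≤ 12 * D ∧
      ∑ s ∈ T, (g s : ℝ) ^ 2 ≤ 2 * ∑ s ∈ T with g s < m, (g s : ℝ) ^ 2 := by
  have hQD := h.sum_sq_le
  have hsplit (m : ℕ) := sum_filter_add_sum_filter_not T (fun s => m ≤ g s) fun s => (g s : ℝ) ^ 2
  simp only [not_le] at hsplit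
  obtain hQ | hQ : 0 = ∑ s ∈ T, (g s : ℝ) ^ 2 ∨ 0 < ∑ s ∈ T, (g s : ℝ) ^ 2 :=
    (sum_nonneg fun s _ => sq_nonneg (g s : ℝ)).eq_or_lt
  · exact ⟨0, by simpa using h.nonneg, by simp [← hQ]⟩
  set Q := ∑ s ∈ T, (g s : ℝ) ^ 2
  have hone : 1 ≤ 6 * D / Q := by rw [le_div_iff₀ hQ]; linarith
  have hlower : 6 * D / Q ≤ ⌈6 * D / Q⌉₊ := Nat.le_ceil _
  have hupper : (⌈6 * D / Q⌉₊ : ℝ) ≤ 6 * D / Q + 6 * D / Q := by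
    linarith [Nat.ceil_lt_add_one (zero_le_one.trans hone)]
  have hpos : (0 : ℝ) < ⌈6 * D / Q⌉₊ := by linarith
  refine ⟨⌈6 * D / Q⌉₊, ?_, ?_⟩
  · rw [← le_div_iff₀ hQ]
    exact hupper.trans_eq (by ring)
  · have htail := h.sum_sq_filter_le (Nat.cast_pos.1 hpos)
    have hhalf : 3 * D / ⌈6 * D / Q⌉₊ ≤ Q / 2 := by
      rw [div_le_iff₀ hQ] at hlower
      rw [div_le_iff₀ hpos]
      linarith
    linarith [hsplit ⌈6 * D / Q⌉₊]

lemma sum_sq_sq_le (h : HasCubicDecay T g D) :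
    (∑ s ∈ T, (g s : ℝ) ^ 2) ^ 2 ≤ 24 * D * ∑ s ∈ T, (g s : ℝ) := by
  obtain ⟨m, hmD, hhalf⟩ := h.exists_le_two_mul_sum_sq_filter_lt
  have hlow : ∑ s ∈ T with g s < m, (g s : ℝ) ^ 2 ≤ m * ∑ s ∈ T, (g s : ℝ) := by
    calc ∑ s ∈ T with g s < m, (g s : ℝ) ^ 2
        ≤ ∑ s ∈ T with g s < m, m * (g s : ℝ) := by
          refine sum_le_sum fun s hs => ?_
          rw [sq]
          gcongr
          exact (mem_filter.1 hs).2.le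
      _ ≤ ∑ s ∈ T, m * (g s : ℝ) :=
          sum_le_sum_of_subset_of_nonneg (filter_subset _ _) fun _ _ _ => by positivity
      _ = m * ∑ s ∈ T, (g s : ℝ) := (mul_sum ..).symm
  calc (∑ s ∈ T, (g s : ℝ) ^ 2) ^ 2
      ≤ (∑ s ∈ T, (g s : ℝ) ^ 2) * (2 * (m * ∑ s ∈ T, (g s : ℝ))) := by
        rw [sq]
        gcongr
        linarith
    _ = 2 * (m * ∑ s ∈ T, (g s : ℝ) ^ 2) * ∑ s ∈ T, (g s : ℝ) := by ring
    _ ≤ 2 * (12 * D) * ∑ s ∈ T, (g s : ℝ) := by gcongr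
    _ = 24 * D * ∑ s ∈ T, (g s : ℝ) := by ring

lemma sum_cube_le (h : HasCubicDecay T g D) {L : ℕ} (hL : ∀ s ∈ T, g s ≤ L) :
    ∑ s ∈ T, (g s : ℝ) ^ 3 ≤ 3 * D * (1 + Real.log L) := by
  calc ∑ s ∈ T, (g s : ℝ) ^ 3
      ≤ ∑ s ∈ T, ∑ k ∈ Ioc 0 (g s), 3 * (k : ℝ) ^ 2 := sum_le_sum fun s _ => cube_le_sum_Ioc _
    _ = ∑ k ∈ Ioc 0 L, 3 * (k : ℝ) ^ 2 * #{s ∈ T | k ≤ g s} :=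
        sum_sum_Ioc_eq_sum_mul_card _ 0 hL
    _ ≤ ∑ k ∈ Ioc 0 L, 3 * D * (k : ℝ)⁻¹ := by
        refine sum_le_sum fun k hk => ?_
        have hk : 0 < k := (mem_Ioc.1 hk).1
        rw [← div_eq_mul_inv, le_div_iff₀ (by positivity)]
        linarith [h k hk]
    _ ≤ 3 * D * (1 + Real.log L) := by
        have hharmonic : ∑ k ∈ Ioc 0 L, (k : ℝ)⁻¹ ≤ 1 + Real.log L := by
          simpa [harmonic_eq_sum_Icc, ← Icc_add_one_left_eq_Ioc] using harmonic_le_one_add_log L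
        rw [← mul_sum]
        gcongr
        linarith [h.nonneg]

end HasCubicDecay

end CubicDecay

section AdditiveEnergy

variable {G : Type*} [AddCommGroup G] [DecidableEq G]

lemma sum_addConvolution_eq_card_filter (A B S : Finset G) :
    ∑ s ∈ S, A.addConvolution B s = #{p ∈ A ×ˢ B | p.1 + p.2 ∈ S} :=
  sum_card_fiberwise_eq_card_filter _ _ _

lemma sum_addConvolution_le (A B S : Finset G) : ∑ s ∈ S, A.addConvolution B s ≤ #A * #B := by
  rw [sum_addConvolution_eq_card_filter, ← card_product]
  exact card_filter_le _ _

lemma addEnergy_eq_sum_addConvolution_mul (A B : Finset G) :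
    E[A, B] = ∑ t ∈ A - A, A.addConvolution (-A) t * B.addConvolution (-B) t := by
  have hsub : ∀ x ∈ {x ∈ (A ×ˢ A) ×ˢ B ×ˢ B | x.1.1 + x.2.1 = x.1.2 + x.2.2},
      x.1.1 - x.1.2 ∈ A - A := by
    intro x hx
    simp only [mem_filter, mem_product] at hx
    exact sub_mem_sub hx.1.1.1 hx.1.1.2
  rw [addEnergy, card_eq_sum_card_fiberwise hsub]
  refine sum_congr rfl fun t _ => ?_
  have hneg : B.addConvolution (-B) t = B.addConvolution (-B) (-t) := by
    rw [addConvolution_neg, neg_neg]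
  rw [hneg, ← card_sub_eq, ← card_sub_eq, ← card_product]
  congr 1
  ext ⟨⟨a, a'⟩, b, b'⟩
  simp only [mem_filter, mem_product]
  grind

/-- The third moment energy `E₃(A)`, counting the sextuples of elements of `A` with
`a₁ - a₂ = a₃ - a₄ = a₅ - a₆`. -/
def thirdAddEnergy (A : Finset G) : ℕ := ∑ t ∈ A - A, A.addConvolution (-A) t ^ 3

lemma sum_addConvolution_inter_vadd_le (A S : Finset G) (t : G) :
    ∑ s ∈ S, (A ∩ (s +ᵥ A)).addConvolution (-(A ∩ (s +ᵥ A))) t ≤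
      A.addConvolution (-A) t ^ 2 := by
  simp only [← card_sub_eq]
  rw [← card_sigma, sq, ← card_product]
  refine card_le_card_of_injOn (fun x => (x.2, x.2.1 - x.1, x.2.2 - x.1)) ?_ ?_
  · rintro ⟨s, a, b⟩ hx
    simp only [coe_sigma, Set.mem_sigma_iff, mem_coe, mem_filter, mem_product, mem_inter,
      mem_vadd_finset, vadd_eq_add] at hx ⊢
    obtain ⟨-, ⟨⟨ha, y, hy, rfl⟩, hb, z, hz, rfl⟩, hab⟩ := hx
    simp only [add_sub_add_left_eq_sub] at hab
    simp only [add_sub_cancel_left, add_sub_add_left_eq_sub]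
    exact ⟨⟨⟨ha, hb⟩, hab⟩, ⟨hy, hz⟩, hab⟩
  · rintro ⟨s, a, b⟩ - ⟨s', a', b'⟩ - h
    simp only [Prod.mk.injEq] at h
    obtain ⟨⟨rfl, rfl⟩, h, -⟩ := h
    simpa using h

lemma sum_addEnergy_inter_vadd_le (A S : Finset G) :
    ∑ s ∈ S, E[A, A ∩ (s +ᵥ A)] ≤ thirdAddEnergy A := by
  simp only [addEnergy_eq_sum_addConvolution_mul, thirdAddEnergy]
  rw [sum_comm]
  refine sum_le_sum fun t _ => ?_
  rw [← mul_sum, pow_succ']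
  exact Nat.mul_le_mul_left _ (sum_addConvolution_inter_vadd_le A S t)

-- The Katz–Koester inclusion `A + (A ∩ (s + A)) ⊆ (A + A) ∩ (s + (A + A))`.
lemma card_add_inter_vadd_le (A : Finset G) (s : G) :
    #(A + A ∩ (s +ᵥ A)) ≤ (A + A).addConvolution (-(A + A)) s := by
  rw [← card_inter_vadd, ← add_vadd_comm]
  exact card_le_card add_inter_subset

lemma sq_card_mul_sq_addConvolution_le (A : Finset G) (s : G) :
    #A ^ 2 * A.addConvolution (-A) s ^ 2 ≤
      (A + A).addConvolution (-(A + A)) s * E[A, A ∩ (s +ᵥ A)] := by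
  rw [← card_inter_vadd A A]
  exact (le_card_add_mul_addEnergy _ _).trans
    (Nat.mul_le_mul_right _ (card_add_inter_vadd_le A s))

lemma sq_card_mul_sum_sq_filter_lt_le (A : Finset G) (m : ℕ) :
    (#A * ∑ s ∈ A - A with A.addConvolution (-A) s < m, A.addConvolution (-A) s ^ 2) ^ 2 ≤
      m * E[A, A + A] * thirdAddEnergy A := by
  set T := {s ∈ A - A | A.addConvolution (-A) s < m}
  have hterm : ∀ s ∈ T, (#A * A.addConvolution (-A) s ^ 2) ^ 2 ≤
      m * (A.addConvolution (-A) s * (A + A).addConvolution (-(A + A)) s) *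
        E[A, A ∩ (s +ᵥ A)] := by
    intro s hs
    calc (#A * A.addConvolution (-A) s ^ 2) ^ 2
        = A.addConvolution (-A) s * A.addConvolution (-A) s *
            (#A ^ 2 * A.addConvolution (-A) s ^ 2) := by ring
      _ ≤ m * A.addConvolution (-A) s *
            ((A + A).addConvolution (-(A + A)) s * E[A, A ∩ (s +ᵥ A)]) :=
          Nat.mul_le_mul (Nat.mul_le_mul_right _ (mem_filter.1 hs).2.le)
            (sq_card_mul_sq_addConvolution_le A s)
      _ = _ := by ring
  calc (#A * ∑ s ∈ T, A.addConvolution (-A) s ^ 2) ^ 2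
      = (∑ s ∈ T, #A * A.addConvolution (-A) s ^ 2) ^ 2 := by rw [mul_sum]
    _ ≤ (∑ s ∈ T, m * (A.addConvolution (-A) s * (A + A).addConvolution (-(A + A)) s)) *
          ∑ s ∈ T, E[A, A ∩ (s +ᵥ A)] :=
        sum_sq_le_sum_mul_sum_of_sq_le_mul T (fun _ _ => Nat.zero_le _)
          (fun _ _ => Nat.zero_le _) hterm
    _ ≤ m * E[A, A + A] * thirdAddEnergy A := by
        rw [← mul_sum, addEnergy_eq_sum_addConvolution_mul A (A + A)]
        gcongr
        · exact filter_subset _ _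
        · exact sum_addEnergy_inter_vadd_le A T

lemma sq_card_mul_addEnergy_cube_le {A : Finset G} {D : ℝ}
    (h : HasCubicDecay (A - A) (A.addConvolution (-A)) D) :
    (#A : ℝ) ^ 2 * (E[A] : ℝ) ^ 3 ≤ 48 * D * E[A, A + A] * thirdAddEnergy A := by
  obtain ⟨m, hmD, hhalf⟩ := h.exists_le_two_mul_sum_sq_filter_lt
  have hE : (E[A] : ℝ) = ∑ s ∈ A - A, (A.addConvolution (-A) s : ℝ) ^ 2 := by
    rw [addEnergy_eq_sum_addConvolution_mul]
    push_cast
    simp only [sq]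
  rw [← hE] at hmD hhalf
  have hlow : ((#A : ℝ) * ∑ s ∈ A - A with A.addConvolution (-A) s < m,
      (A.addConvolution (-A) s : ℝ) ^ 2) ^ 2 ≤ m * E[A, A + A] * thirdAddEnergy A := by
    exact_mod_cast sq_card_mul_sum_sq_filter_lt_le A m
  set Q := ∑ s ∈ A - A with A.addConvolution (-A) s < m, (A.addConvolution (-A) s : ℝ) ^ 2
  calc (#A : ℝ) ^ 2 * (E[A] : ℝ) ^ 3 = E[A] * (#A * (E[A] : ℝ)) ^ 2 := by ring
    _ ≤ E[A] * (#A * (2 * Q)) ^ 2 := by gcongr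
    _ = 4 * E[A] * (#A * Q) ^ 2 := by ring
    _ ≤ 4 * E[A] * (m * E[A, A + A] * thirdAddEnergy A) := by gcongr
    _ = 4 * (m * E[A]) * E[A, A + A] * thirdAddEnergy A := by ring
    _ ≤ 4 * (12 * D) * E[A, A + A] * thirdAddEnergy A := by gcongr
    _ = 48 * D * E[A, A + A] * thirdAddEnergy A := by ring

lemma HasCubicDecay.addEnergy_sq_le {A B : Finset G} {D : ℝ}
    (h : HasCubicDecay (A + B) (A.addConvolution B) D) :
    (E[A, B] : ℝ) ^ 2 ≤ 24 * D * (#A * #B) := by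
  have hE : (E[A, B] : ℝ) = ∑ t ∈ A + B, (A.addConvolution B t : ℝ) ^ 2 := by
    exact_mod_cast addEnergy_eq_sum_sq' A B
  have hsum : ∑ t ∈ A + B, (A.addConvolution B t : ℝ) ≤ #A * #B := by
    exact_mod_cast sum_addConvolution_le A B (A + B)
  rw [hE]
  refine h.sum_sq_sq_le.trans ?_
  gcongr
  linarith [h.nonneg]

lemma HasCubicDecay.thirdAddEnergy_le {A : Finset G} {D : ℝ}
    (h : HasCubicDecay (A - A) (A.addConvolution (-A)) D) :
    (thirdAddEnergy A : ℝ) ≤ 3 * D * (1 + Real.log #A) := by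
  rw [thirdAddEnergy]
  push_cast
  exact h.sum_cube_le fun t _ => addConvolution_le_card_left

lemma card_pow_le_of_hasCubicDecay {A : Finset G} {D₁ D₂ : ℝ}
    (h₁ : HasCubicDecay (A - A) (A.addConvolution (-A)) D₁)
    (h₂ : HasCubicDecay (A + (A + A)) (A.addConvolution (A + A)) D₂) :
    (#A : ℝ) ^ 27 ≤ 144 ^ 2 * 24 * D₁ ^ 4 * D₂ * #(A + A) ^ 7 * (1 + Real.log #A) ^ 2 := by
  obtain rfl | hA := A.eq_empty_or_nonempty
  · have := h₂.nonneg
    rw [card_empty, Nat.cast_zero, zero_pow (by norm_num)]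
    positivity
  have hn : (0 : ℝ) < #A := by exact_mod_cast hA.card_pos
  have hcauchy : (#A : ℝ) ^ 4 ≤ #(A + A) * E[A] := by
    have h := le_card_add_mul_addEnergy A A
    rw [← pow_add] at h
    exact_mod_cast h
  have hD₁ := h₁.nonneg
  have hthird := h₁.thirdAddEnergy_le
  have hmixed := h₂.addEnergy_sq_le
  have henergy := sq_card_mul_addEnergy_cube_le h₁
  set n := (#A : ℝ)
  set S := (#(A + A) : ℝ)
  set L := 1 + Real.log n
  have hcube : n ^ 2 * (E[A] : ℝ) ^ 3 ≤ 144 * D₁ ^ 2 * E[A, A + A] * L := by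
    refine henergy.trans ((mul_le_mul_of_nonneg_left hthird (by positivity)).trans_eq ?_)
    ring
  refine le_of_mul_le_mul_left ?_ hn
  calc n * n ^ 27 = n ^ 4 * (n ^ 4) ^ 6 := by ring
    _ ≤ n ^ 4 * (S * E[A]) ^ 6 := by gcongr
    _ = S ^ 6 * (n ^ 2 * (E[A] : ℝ) ^ 3) ^ 2 := by ring
    _ ≤ S ^ 6 * (144 * D₁ ^ 2 * E[A, A + A] * L) ^ 2 := by gcongr
    _ = S ^ 6 * 144 ^ 2 * D₁ ^ 4 * L ^ 2 * (E[A, A + A] : ℝ) ^ 2 := by ring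
    _ ≤ S ^ 6 * 144 ^ 2 * D₁ ^ 4 * L ^ 2 * (24 * D₂ * (n * S)) := by gcongr
    _ = n * (144 ^ 2 * 24 * D₁ ^ 4 * D₂ * S ^ 7 * L ^ 2) := by ring

end AdditiveEnergy

section MonotoneBlocks

variable {α β : Type*} [LinearOrder α]

lemma strictMonoOn_card_filter_lt (X : Finset α) : StrictMonoOn (fun x => #{y ∈ X | y < x}) X := by
  intro x hx x' _ hxx'
  refine card_lt_card (ssubset_iff_of_subset ?_ |>.2 ⟨x, ?_⟩)
  · exact monotone_filter_right _ fun y _ hy => hy.trans hxx'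
  · exact ⟨mem_filter.2 ⟨hx, hxx'⟩, fun hx => lt_irrefl x (mem_filter.1 hx).2⟩

lemma card_filter_div_eq_le {X : Finset β} {r : β → ℕ} (hr : Set.InjOn r X) {d : ℕ} (hd : 0 < d)
    (j : ℕ) : #{x ∈ X | r x / d = j} ≤ d := by
  calc #{x ∈ X | r x / d = j} ≤ #(Ico (j * d) (j * d + d)) := by
        refine card_le_card_of_injOn r (fun x hx => ?_) (hr.mono fun x hx => (mem_filter.1 hx).1)
        have := (Nat.div_eq_iff hd).1 (mem_filter.1 hx).2
        exact mem_coe.2 (mem_Ico.2 (by omega))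
    _ = d := by rw [Nat.card_Ico, Nat.add_sub_cancel_left]

lemma card_filter_eq_le_card_mul {κ : Type*} [DecidableEq κ] {X : Finset β} {u : β → κ} {d : ℕ}
    (h : ∀ j, #{x ∈ X | u x = j} ≤ d) : #{p ∈ X ×ˢ X | u p.1 = u p.2} ≤ #X * d := by
  rw [card_filter, sum_product_right]
  simp only [← card_filter]
  exact sum_le_card_nsmul _ _ _ fun y _ => h (u y)

lemma exists_monotone_blocks (X : Finset α) {t : ℕ} (ht : 0 < t) (htX : t ≤ #X) :
    ∃ u : α → ℕ, Monotone u ∧ (∀ x, u x < t) ∧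
      #{p ∈ X ×ˢ X | u p.1 = u p.2} * t ≤ 2 * #X ^ 2 := by
  have hd : 0 < #X / t + 1 := Nat.succ_pos _
  refine ⟨fun x => #{y ∈ X | y < x} / (#X / t + 1), fun x x' hxx' => ?_, fun x => ?_, ?_⟩
  · exact Nat.div_le_div_right
      (card_le_card (monotone_filter_right _ fun y _ hy => hy.trans_le hxx'))
  · rw [Nat.div_lt_iff_lt_mul hd]
    exact (card_filter_le _ _).trans_lt (Nat.lt_mul_div_succ _ ht)
  · calc _ ≤ #X * (#X / t + 1) * t := Nat.mul_le_mul_right _ (card_filter_eq_le_card_mul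
          (card_filter_div_eq_le (strictMonoOn_card_filter_lt X).injOn hd))
      _ = #X * (#X / t * t + t) := by ring
      _ ≤ #X * (#X + #X) := by
          gcongr
          exact Nat.div_mul_le_self _ _
      _ = 2 * #X ^ 2 := by ring

lemma card_le_card_image_add_card_collisions {κ : Type*} [DecidableEq κ] (T : Finset α)
    (w : α → κ) :
    #T ≤ #(T.image w) + #{p ∈ T ×ˢ T | p.1 < p.2 ∧ w p.1 = w p.2} := by
  rw [← card_filter_add_card_filter_not (s := T) fun x => ∀ y ∈ T, y < x → w y ≠ w x]
  gcongr
  · refine card_le_card_of_injOn w (fun x hx => ?_) fun x hx x' hx' h => ?_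
    · exact mem_image_of_mem _ (mem_filter.1 hx).1
    · rw [mem_coe, mem_filter] at hx hx'
      rcases lt_trichotomy x x' with hlt | heq | hlt
      · exact absurd h (hx'.2 x hx.1 hlt)
      · exact heq
      · exact absurd h.symm (hx.2 x' hx'.1 hlt)
  · refine card_le_card_of_surjOn Prod.snd fun x hx => ?_
    simp only [coe_filter, not_forall, not_not] at hx
    obtain ⟨hx, y, hy, hyx, hw⟩ := hx
    exact ⟨(y, x), by simp [hx, hy, hyx, hw], rfl⟩

lemma card_le_two_mul_add_card_same_cell {T : Finset α} {u v : α → ℕ} {t : ℕ}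
    (hu : MonotoneOn u T) (hv : MonotoneOn v T) (hut : ∀ x ∈ T, u x < t) (hvt : ∀ x ∈ T, v x < t) :
    #T ≤ 2 * t + #{p ∈ T ×ˢ T | p.1 < p.2 ∧ u p.1 = u p.2 ∧ v p.1 = v p.2} := by
  refine (card_le_card_image_add_card_collisions T fun x => u x + v x).trans ?_
  gcongr ?_ + #?_
  · rw [← card_range (2 * t)]
    refine card_le_card (image_subset_iff.2 fun x hx => mem_range.2 ?_)
    have := hut x hx
    have := hvt x hx
    omega
  · intro p hp
    simp only [mem_filter, mem_product] at hp ⊢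
    have := hu hp.1.1 hp.1.2 hp.2.1.le
    have := hv hp.1.1 hp.1.2 hp.2.1.le
    exact ⟨hp.1, hp.2.1, by omega⟩

end MonotoneBlocks

section Incidences

variable {G H : Type*} [AddCommGroup G] [LinearOrder G] [AddCommGroup H] [LinearOrder H]
  {f : G → H}

/-- Discrete strict convexity: for each positive `d`, the increment `f (x + d) - f x` increases
strictly with `x`, as long as `x` and `x + d` belong to `s`. This is all that incidence bounds use
about a convex function, and it makes sense in ordered groups. -/
def StrictMonoIncrementsOn (f : G → H) (s : Set G) : Prop :=
  ∀ d > 0, StrictMonoOn (fun x => f (x + d) - f x) {x | x ∈ s ∧ x + d ∈ s}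

lemma StrictMonoIncrementsOn.mono {s t : Set G} (hf : StrictMonoIncrementsOn f t) (hst : s ⊆ t) :
    StrictMonoIncrementsOn f s :=
  fun d hd => (hf d hd).mono fun _ hx => ⟨hst hx.1, hst hx.2⟩

variable [IsOrderedAddMonoid G]

lemma StrictMonoIncrementsOn.comp_neg [IsOrderedAddMonoid H] {s : Set G}
    (hf : StrictMonoIncrementsOn f s) : StrictMonoIncrementsOn (fun x => f (-x)) (-s) := by
  intro d hd x hx y hy hxy
  have h := hf d hd (a := -(y + d)) (b := -(x + d)) ⟨hy.2, by simpa using hy.1⟩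
    ⟨hx.2, by simpa using hx.1⟩ (neg_lt_neg (by gcongr))
  have hcancel (z : G) : -(z + d) + d = -z := by abel
  simp only [hcancel] at h
  simpa only [neg_sub] using neg_lt_neg h

variable {A : Finset G}

lemma sum_card_same_cell_le (hf : StrictMonoIncrementsOn f A) (B S : Finset G) (C : Finset H)
    {κ : Type*} [DecidableEq κ] (u : G → κ) (v : H → κ) :
    ∑ q ∈ B ×ˢ C, #{p ∈ {a ∈ A | a + q.1 ∈ S} ×ˢ {a ∈ A | a + q.1 ∈ S} | p.1 < p.2 ∧
        u (p.1 + q.1) = u (p.2 + q.1) ∧ v (f p.1 + q.2) = v (f p.2 + q.2)} ≤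
      #{p ∈ S ×ˢ S | u p.1 = u p.2} *
        #{p ∈ (A.image f + C) ×ˢ (A.image f + C) | v p.1 = v p.2} := by
  rw [← card_sigma, ← card_product]
  refine card_le_card_of_injOn (fun x => ((x.2.1 + x.1.1, x.2.2 + x.1.1),
    (f x.2.1 + x.1.2, f x.2.2 + x.1.2))) ?_ ?_
  · rintro ⟨⟨b, c⟩, a, a'⟩ hx
    simp only [coe_sigma, Set.mem_sigma_iff, mem_coe, mem_filter, mem_product] at hx ⊢
    obtain ⟨⟨-, hc⟩, ⟨⟨ha, hab⟩, ha', hab'⟩, -, hu, hv⟩ := hx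
    exact ⟨⟨⟨hab, hab'⟩, hu⟩, ⟨add_mem_add (mem_image_of_mem f ha) hc,
      add_mem_add (mem_image_of_mem f ha') hc⟩, hv⟩
  · rintro ⟨⟨b, c⟩, a, a'⟩ hx ⟨⟨b₁, c₁⟩, a₁, a₁'⟩ hx₁ h
    simp only [coe_sigma, Set.mem_sigma_iff, mem_coe, mem_filter, mem_product] at hx hx₁
    simp only [Prod.mk.injEq] at h
    obtain ⟨⟨hb, hb'⟩, hc, hc'⟩ := h
    -- Increments being strictly monotone, the displacement `(a' - a, f a' - f a)` determines `a`.
    have hd : a₁' = a₁ + (a' - a) := by grind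
    have ha : a = a₁ := by
      refine (hf (a' - a) (sub_pos.2 hx.2.2.1)).injOn ⟨hx.2.1.1.1, ?_⟩ ⟨hx₁.2.1.1.1, ?_⟩ ?_
      · simpa using hx.2.1.2.1
      · simpa [← hd] using hx₁.2.1.2.1
      · simp only [← hd, add_sub_cancel]
        grind
    subst ha
    obtain rfl : b = b₁ := add_left_cancel hb
    obtain rfl : c = c₁ := add_left_cancel hc
    obtain rfl : a' = a₁' := add_right_cancel hb'
    rfl

variable [IsOrderedAddMonoid H]

lemma sum_addConvolution_mul_le (hmono : MonotoneOn f A) (hf : StrictMonoIncrementsOn f A)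
    (B S : Finset G) (C : Finset H) {t : ℕ} (ht : 0 < t) (htS : t ≤ #S)
    (htF : t ≤ #(A.image f + C)) :
    (∑ s ∈ S, A.addConvolution B s) * #C * t ^ 2 ≤
      #B * #C * (2 * t) * t ^ 2 + 4 * #S ^ 2 * #(A.image f + C) ^ 2 := by
  obtain ⟨u, hu, hut, hucard⟩ := exists_monotone_blocks S ht htS
  obtain ⟨v, hv, hvt, hvcard⟩ := exists_monotone_blocks _ ht htF
  have hsum : ∑ q ∈ B ×ˢ C, #{a ∈ A | a + q.1 ∈ S} = (∑ s ∈ S, A.addConvolution B s) * #C := by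
    rw [sum_product, sum_addConvolution_eq_card_filter, card_filter, sum_product_right]
    simp only [sum_const, smul_eq_mul, ← mul_sum, card_filter, mul_comm]
  have hcurve (q : G × H) := card_le_two_mul_add_card_same_cell
    (T := {a ∈ A | a + q.1 ∈ S}) (u := fun a => u (a + q.1)) (v := fun a => v (f a + q.2))
    (fun a _ a' _ h => hu (by gcongr))
    (fun a ha a' ha' h => hv (by
      gcongr
      exact hmono (mem_filter.1 ha).1 (mem_filter.1 ha').1 h))
    (fun a _ => hut _) (fun a _ => hvt _)
  set P := #{p ∈ S ×ˢ S | u p.1 = u p.2}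
  set R := #{p ∈ (A.image f + C) ×ˢ (A.image f + C) | v p.1 = v p.2}
  calc (∑ s ∈ S, A.addConvolution B s) * #C * t ^ 2
      ≤ (#B * #C * (2 * t) + P * R) * t ^ 2 := by
        rw [← hsum]
        gcongr
        refine (sum_le_sum fun q _ => hcurve q).trans ?_
        rw [sum_add_distrib, sum_const, card_product, smul_eq_mul]
        gcongr
        exact sum_card_same_cell_le hf B S C u v
    _ = #B * #C * (2 * t) * t ^ 2 + (P * t) * (R * t) := by ring
    _ ≤ #B * #C * (2 * t) * t ^ 2 + (2 * #S ^ 2) * (2 * #(A.image f + C) ^ 2) := by gcongr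
    _ = _ := by ring

-- The bound `h` is used with `t` about `m * k / (4 * M)`, for which its first term is at most half
-- of the left-hand side.
lemma mul_cube_mul_le_of_forall_mul_sq_le {m k c M Y : ℕ} (hkM : k ≤ M) (hkY : k ≤ Y) (hcY : c ≤ Y)
    (hmk : m * k ≤ Y * M) (hM : 0 < M)
    (h : ∀ t > 0, t ≤ m → t ≤ Y → m * k * c * t ^ 2 ≤ M * c * (2 * t) * t ^ 2 + 4 * m ^ 2 * Y ^ 2) :
    m * k ^ 3 * c ≤ 512 * Y ^ 2 * M ^ 2 := by
  rcases lt_or_ge (m * k) (4 * M) with hsmall | hlarge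
  · calc m * k ^ 3 * c = m * k * k * k * c := by ring
      _ ≤ 4 * M * M * Y * Y := by gcongr
      _ ≤ 512 * Y ^ 2 * M ^ 2 := by nlinarith [Nat.zero_le (Y ^ 2 * M ^ 2)]
  · obtain ⟨t, ht⟩ : ∃ t, t = m * k / (4 * M) := ⟨_, rfl⟩
    have ht0 : 0 < t := ht ▸ Nat.div_pos hlarge (by positivity)
    have hlower : t * (4 * M) ≤ m * k := ht ▸ Nat.div_mul_le_self _ _
    have hupper : m * k ≤ 8 * M * t := by
      have := Nat.lt_mul_div_succ (m * k) (b := 4 * M) (by positivity)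
      rw [← ht] at this
      nlinarith
    have htm : t ≤ m := by nlinarith
    have htY : t ≤ Y := by nlinarith
    have hhalf : m * k * c * t ^ 2 ≤ 8 * m ^ 2 * Y ^ 2 := by
      have := Nat.mul_le_mul_right (c * t ^ 2) hlower
      linarith [h t ht0 htm htY]
    refine Nat.le_of_mul_le_mul_right (c := t ^ 2) ?_ (by positivity)
    calc m * k ^ 3 * c * t ^ 2 = k ^ 2 * (m * k * c * t ^ 2) := by ring
      _ ≤ k ^ 2 * (8 * m ^ 2 * Y ^ 2) := by gcongr
      _ = 8 * Y ^ 2 * (m * k) ^ 2 := by ring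
      _ ≤ 8 * Y ^ 2 * (8 * M * t) ^ 2 := by gcongr
      _ = 512 * Y ^ 2 * M ^ 2 * t ^ 2 := by ring

lemma card_mul_cube_mul_card_le (hmono : StrictMonoOn f A) (hf : StrictMonoIncrementsOn f A)
    (B : Finset G) {S : Finset G} (C : Finset H) {k : ℕ} (hk : 0 < k)
    (hS : ∀ s ∈ S, k ≤ A.addConvolution B s) :
    #S * k ^ 3 * #C ≤ 512 * #(A.image f + C) ^ 2 * #B ^ 2 := by
  obtain rfl | ⟨s₀, hs₀⟩ := S.eq_empty_or_nonempty
  · simp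
  obtain rfl | hC := C.eq_empty_or_nonempty
  · simp
  have hkA : k ≤ #A := (hS s₀ hs₀).trans addConvolution_le_card_left
  have hkB : k ≤ #B := (hS s₀ hs₀).trans addConvolution_le_card_right
  have hSk : #S * k ≤ ∑ s ∈ S, A.addConvolution B s := card_nsmul_le_sum _ _ _ hS
  have hAF : #A ≤ #(A.image f + C) :=
    (card_image_of_injOn hmono.injOn).ge.trans (card_le_card_add_right hC)
  have hCF : #C ≤ #(A.image f + C) := by
    refine card_le_card_add_left (Nonempty.image (card_pos.1 (hk.trans_le hkA)) f)
  refine mul_cube_mul_le_of_forall_mul_sq_le hkB (hkA.trans hAF) hCF ?_ (hk.trans_le hkB)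
    fun t ht htS htF => ?_
  · calc #S * k ≤ #A * #B := hSk.trans (sum_addConvolution_le A B S)
      _ ≤ #(A.image f + C) * #B := by gcongr
  · calc #S * k * #C * t ^ 2 ≤ (∑ s ∈ S, A.addConvolution B s) * #C * t ^ 2 := by gcongr
      _ ≤ _ := sum_addConvolution_mul_le hmono.monotoneOn hf B S C ht htS htF

lemma StrictMonoIncrementsOn.hasCubicDecay (hf : StrictMonoIncrementsOn f A)
    (hmono : StrictMonoOn f A) (B : Finset G) {C : Finset H} (hC : C.Nonempty) :
    HasCubicDecay (A + B) (A.addConvolution B) (512 * #(A.image f + C) ^ 2 * #B ^ 2 / #C) := by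
  intro k hk
  rw [le_div_iff₀ (by exact_mod_cast hC.card_pos)]
  exact_mod_cast card_mul_cube_mul_card_le hmono hf B C hk fun s hs => (mem_filter.1 hs).2

end Incidences

section SumsetBound

variable {G H : Type*} [AddCommGroup G] [LinearOrder G] [IsOrderedAddMonoid G]
  [AddCommGroup H] [LinearOrder H] [IsOrderedAddMonoid H] {f : G → H} {A : Finset G}

lemma StrictMonoIncrementsOn.card_pow_mul_card_pow_le_of_strictMonoOn
    (hf : StrictMonoIncrementsOn f A) (hmono : StrictMonoOn f A) (C : Finset H) :
    (#A : ℝ) ^ 19 * #C ^ 5 ≤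
      2 ^ 64 * #(A.image f + C) ^ 10 * #(A + A) ^ 9 * (1 + Real.log #A) ^ 2 := by
  obtain rfl | hA := A.eq_empty_or_nonempty
  · simp
  obtain rfl | hC := C.eq_empty_or_nonempty
  · simp
  have hn : (0 : ℝ) < #A := by exact_mod_cast hA.card_pos
  have hc : (0 : ℝ) < #C := by exact_mod_cast hC.card_pos
  have hdiff := hf.hasCubicDecay hmono (-A) hC
  rw [← sub_eq_add_neg, card_neg] at hdiff
  have hpow := card_pow_le_of_hasCubicDecay hdiff (hf.hasCubicDecay hmono (A + A) hC)
  set n := (#A : ℝ)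
  set c := (#C : ℝ)
  set Y := (#(A.image f + C) : ℝ)
  set S := (#(A + A) : ℝ)
  set L := 1 + Real.log n
  refine le_of_mul_le_mul_left ?_ (pow_pos hn 8)
  calc n ^ 8 * (n ^ 19 * c ^ 5) = n ^ 27 * c ^ 5 := by ring
    _ ≤ 144 ^ 2 * 24 * (512 * Y ^ 2 * n ^ 2 / c) ^ 4 * (512 * Y ^ 2 * S ^ 2 / c) * S ^ 7 * L ^ 2 *
          c ^ 5 := by gcongr
    _ = 144 ^ 2 * 24 * 512 ^ 5 * (n ^ 8 * (Y ^ 10 * S ^ 9 * L ^ 2)) := by field_simp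
    _ ≤ 2 ^ 64 * (n ^ 8 * (Y ^ 10 * S ^ 9 * L ^ 2)) := by gcongr; norm_num
    _ = n ^ 8 * (2 ^ 64 * Y ^ 10 * S ^ 9 * L ^ 2) := by ring

lemma StrictMonoIncrementsOn.card_pow_mul_card_pow_le_of_strictAntiOn
    (hf : StrictMonoIncrementsOn f A) (hanti : StrictAntiOn f A) (C : Finset H) :
    (#A : ℝ) ^ 19 * #C ^ 5 ≤
      2 ^ 64 * #(A.image f + C) ^ 10 * #(A + A) ^ 9 * (1 + Real.log #A) ^ 2 := by
  have hneg : StrictMonoOn (fun x => f (-x)) (-A : Finset G) := fun x hx y hy hxy =>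
    hanti (by simpa using hy) (by simpa using hx) (neg_lt_neg hxy)
  have himage : (-A).image (fun x => f (-x)) = A.image f := by
    rw [← image_neg_eq_neg, image_image]
    simp only [Function.comp_def, neg_neg]
  have hbound := StrictMonoIncrementsOn.card_pow_mul_card_pow_le_of_strictMonoOn
    (by simpa using hf.comp_neg) hneg C
  rwa [himage, ← neg_add, card_neg, card_neg] at hbound

end SumsetBound

section StrictConvex

variable {𝕜 β : Type*} [Field 𝕜] [LinearOrder 𝕜] [IsStrictOrderedRing 𝕜]
  [AddCommGroup β] [LinearOrder β] [IsOrderedAddMonoid β] [Module 𝕜 β]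
  {s : Set 𝕜} {f : 𝕜 → β} {A : Finset 𝕜}

lemma strictMonoIncrementsOn_of_strictConvexOn (hf : StrictConvexOn 𝕜 s f) :
    StrictMonoIncrementsOn f s := by
  intro d hd x hx y hy hxy
  have hℓ : 0 < y - x + d := by linarith
  have hne : x ≠ y + d := by linarith
  have ha : 0 < d / (y - x + d) := by positivity
  have hb : 0 < (y - x) / (y - x + d) := div_pos (sub_pos.2 hxy) hℓ
  have hab : d / (y - x + d) + (y - x) / (y - x + d) = 1 := by field_simp; ring
  have h₁ := hf.2 hx.1 hy.2 hne ha hb hab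
  have h₂ := hf.2 hx.1 hy.2 hne hb ha (by rw [add_comm, hab])
  have hy_eq : (d / (y - x + d)) • x + ((y - x) / (y - x + d)) • (y + d) = y := by
    simp only [smul_eq_mul]; field_simp; ring
  have hx_eq : ((y - x) / (y - x + d)) • x + (d / (y - x + d)) • (y + d) = x + d := by
    simp only [smul_eq_mul]; field_simp; ring
  rw [hy_eq] at h₁
  rw [hx_eq] at h₂
  rw [sub_lt_sub_iff]
  calc f (x + d) + f y
      < (((y - x) / (y - x + d)) • f x + (d / (y - x + d)) • f (y + d)) +
          ((d / (y - x + d)) • f x + ((y - x) / (y - x + d)) • f (y + d)) := add_lt_add h₂ h₁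
    _ = (d / (y - x + d) + (y - x) / (y - x + d)) • (f (y + d) + f x) := by module
    _ = f (y + d) + f x := by rw [hab, one_smul]

variable [PosSMulStrictMono 𝕜 β]

lemma lt_max_of_strictConvexOn (hf : StrictConvexOn 𝕜 s f) {x y z : 𝕜} (hx : x ∈ s) (hz : z ∈ s)
    (hxy : x < y) (hyz : y < z) : f y < max (f x) (f z) :=
  hf.lt_on_openSegment hx hz (hxy.trans hyz).ne (by
    rw [openSegment_eq_Ioo (hxy.trans hyz)]
    exact ⟨hxy, hyz⟩)

lemma exists_subset_strictMonoOn_or_strictAntiOn (hf : StrictConvexOn 𝕜 s f) (hA : ↑A ⊆ s) :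
    ∃ B ⊆ A, #A ≤ 2 * #B ∧ (StrictMonoOn f B ∨ StrictAntiOn f B) := by
  obtain rfl | hne := A.eq_empty_or_nonempty
  · exact ⟨∅, by simp [StrictMonoOn]⟩
  obtain ⟨a₀, ha₀, hmin⟩ := A.exists_min_image (fun a => toLex (f a, a)) hne
  simp only [Prod.Lex.toLex_le_toLex] at hmin
  have hle {x : 𝕜} (hx : x ∈ A) : f a₀ ≤ f x := (hmin x hx).elim le_of_lt fun h => h.1.le
  have hanti : StrictAntiOn f {x ∈ A | x ≤ a₀} := by
    intro x hx y hy hxy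
    obtain rfl | hya := hy.2.eq_or_lt
    · exact (hmin x hx.1).resolve_right fun h => hxy.not_ge h.2
    · exact (lt_max_iff.1 (lt_max_of_strictConvexOn hf (hA hx.1) (hA ha₀) hxy hya)).resolve_right
        (hle hy.1).not_gt
  have hmono : StrictMonoOn f {x ∈ A | ¬x ≤ a₀} := by
    intro x hx y hy hxy
    exact (lt_max_iff.1 (lt_max_of_strictConvexOn hf (hA ha₀) (hA hy.1) (not_le.1 hx.2)
      hxy)).resolve_left (hle hx.1).not_gt
  have hsplit := card_filter_add_card_filter_not (s := A) (· ≤ a₀)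
  rcases le_total #{x ∈ A | x ≤ a₀} #{x ∈ A | ¬x ≤ a₀} with h | h
  · exact ⟨{x ∈ A | ¬x ≤ a₀}, filter_subset _ _, by omega, Or.inl (by simpa using hmono)⟩
  · exact ⟨{x ∈ A | x ≤ a₀}, filter_subset _ _, by omega, Or.inr (by simpa using hanti)⟩

lemma card_le_two_mul_card_image_of_strictConvexOn (hf : StrictConvexOn 𝕜 s f) (hA : ↑A ⊆ s) :
    #A ≤ 2 * #(A.image f) := by
  obtain ⟨B, hBA, hcard, hmono⟩ := exists_subset_strictMonoOn_or_strictAntiOn hf hA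
  have hinj : Set.InjOn f B := hmono.elim StrictMonoOn.injOn StrictAntiOn.injOn
  rw [← card_image_of_injOn hinj] at hcard
  exact hcard.trans (Nat.mul_le_mul_left 2 (card_le_card (image_subset_image hBA)))

lemma card_pow_mul_card_pow_le_of_strictConvexOn (hf : StrictConvexOn 𝕜 s f) (hA : ↑A ⊆ s)
    (C : Finset β) :
    (#A : ℝ) ^ 19 * #C ^ 5 ≤
      2 ^ 83 * #(A.image f + C) ^ 10 * #(A + A) ^ 9 * (1 + Real.log #A) ^ 2 := by
  obtain ⟨B, hBA, hcard, hmono⟩ := exists_subset_strictMonoOn_or_strictAntiOn hf hA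
  obtain rfl | hA₀ := A.eq_empty_or_nonempty
  · simp
  have hB : 0 < #B := by have := hA₀.card_pos; omega
  have hinc : StrictMonoIncrementsOn f B :=
    (strictMonoIncrementsOn_of_strictConvexOn hf).mono ((coe_subset.2 hBA).trans hA)
  have hmonotone : (2 : ℝ) ^ 64 * #(B.image f + C) ^ 10 * #(B + B) ^ 9 * (1 + Real.log #B) ^ 2 ≤
      2 ^ 64 * #(A.image f + C) ^ 10 * #(A + A) ^ 9 * (1 + Real.log #A) ^ 2 := by
    gcongr
  have hbound := hmono.elim (fun h => hinc.card_pow_mul_card_pow_le_of_strictMonoOn h C)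
    fun h => hinc.card_pow_mul_card_pow_le_of_strictAntiOn h C
  calc (#A : ℝ) ^ 19 * #C ^ 5 ≤ (2 * (#B : ℝ)) ^ 19 * #C ^ 5 := by
        gcongr
        exact_mod_cast hcard
    _ = 2 ^ 19 * ((#B : ℝ) ^ 19 * #C ^ 5) := by ring
    _ ≤ 2 ^ 19 * (2 ^ 64 * #(A.image f + C) ^ 10 * #(A + A) ^ 9 * (1 + Real.log #A) ^ 2) :=
        mul_le_mul_of_nonneg_left (hbound.trans hmonotone) (by positivity)
    _ = 2 ^ 83 * #(A.image f + C) ^ 10 * #(A + A) ^ 9 * (1 + Real.log #A) ^ 2 := by ring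

lemma one_add_log_le_three_mul_log {n : ℕ} (hn : 2 ≤ n) :
    1 + Real.log n ≤ 3 * Real.log n := by
  have h : Real.log 2 ≤ Real.log n := Real.log_le_log two_pos (by exact_mod_cast hn)
  linarith [Real.log_two_gt_d9]

lemma card_pow_le_max_pow_mul_log_sq (hf : StrictConvexOn 𝕜 s f) (hA : ↑A ⊆ s) (h2 : 2 ≤ #A) :
    (#A : ℝ) ^ 24 ≤
      2 ^ 92 * max (#(A.image f + A.image f) : ℝ) #(A + A) ^ 19 * Real.log #A ^ 2 := by
  have himage : (#A : ℝ) ≤ 2 * #(A.image f) := by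
    exact_mod_cast card_le_two_mul_card_image_of_strictConvexOn hf hA
  have hlog := one_add_log_le_three_mul_log h2
  set X := max (#(A.image f + A.image f) : ℝ) #(A + A)
  have hmax : (2 : ℝ) ^ 83 * #(A.image f + A.image f) ^ 10 * #(A + A) ^ 9 *
      (1 + Real.log #A) ^ 2 ≤ 2 ^ 83 * X ^ 10 * X ^ 9 * (3 * Real.log #A) ^ 2 := by
    gcongr
    · exact le_max_left _ _
    · exact le_max_right _ _
  have hbound := card_pow_mul_card_pow_le_of_strictConvexOn hf hA (A.image f)
  calc (#A : ℝ) ^ 24 = (#A : ℝ) ^ 19 * (#A : ℝ) ^ 5 := by ring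
    _ ≤ (#A : ℝ) ^ 19 * (2 * (#(A.image f) : ℝ)) ^ 5 := by gcongr
    _ = 2 ^ 5 * ((#A : ℝ) ^ 19 * (#(A.image f) : ℝ) ^ 5) := by ring
    _ ≤ 2 ^ 5 * (2 ^ 83 * X ^ 10 * X ^ 9 * (3 * Real.log #A) ^ 2) :=
        mul_le_mul_of_nonneg_left (hbound.trans hmax) (by positivity)
    _ = 2 ^ 88 * 3 ^ 2 * (X ^ 19 * Real.log #A ^ 2) := by ring
    _ ≤ 2 ^ 92 * (X ^ 19 * Real.log #A ^ 2) := by gcongr; norm_num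
    _ = 2 ^ 92 * X ^ 19 * Real.log #A ^ 2 := by ring

lemma rpow_div_rpow_le_of_pow_le_mul {a b d : ℕ} (hb : b ≠ 0) {c x y z : ℝ} (hc : 0 < c)
    (hx : 0 ≤ x) (hy : 0 ≤ y) (hz : 0 < z) (h : x ^ a ≤ c * y ^ b * z ^ d) :
    (c ^ (1 / b : ℝ))⁻¹ * x ^ (a / b : ℝ) / z ^ (d / b : ℝ) ≤ y := by
  have hroot : x ^ (a / b : ℝ) ≤ c ^ (1 / b : ℝ) * y * z ^ (d / b : ℝ) := by
    calc x ^ (a / b : ℝ) = (x ^ a) ^ (1 / b : ℝ) := by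
          rw [← Real.rpow_natCast_mul hx, mul_one_div]
      _ ≤ (c * y ^ b * z ^ d) ^ (1 / b : ℝ) := by gcongr
      _ = c ^ (1 / b : ℝ) * y * z ^ (d / b : ℝ) := by
          rw [Real.mul_rpow (by positivity) (by positivity), Real.mul_rpow hc.le (by positivity),
            one_div, Real.pow_rpow_inv_natCast hy hb, ← Real.rpow_natCast_mul hz.le, div_eq_mul_inv]
  rw [div_le_iff₀ (by positivity), inv_mul_le_iff₀ (by positivity), ← mul_assoc]
  exact hroot

theorem stmt14_general : ∃ K : ℝ, 0 < K ∧
    ∀ (s : Set 𝕜) (f : 𝕜 → β), StrictConvexOn 𝕜 s f →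
    ∀ A : Finset 𝕜, ↑A ⊆ s → 2 ≤ #A →
    max (#(A.image f + A.image f) : ℝ) #(A + A) ≥
      K * (#A : ℝ) ^ ((24 : ℝ) / 19) / Real.log #A ^ ((2 : ℝ) / 19) := by
  refine ⟨((2 ^ 92 : ℝ) ^ ((1 : ℝ) / (19 : ℕ)))⁻¹, by positivity, fun s f hf A hA h2 => ?_⟩
  have hlog : 0 < Real.log #A := Real.log_pos (by exact_mod_cast h2)
  exact_mod_cast rpow_div_rpow_le_of_pow_le_mul (by norm_num) (by positivity)
    (Nat.cast_nonneg _) (by positivity) hlog (card_pow_le_max_pow_mul_log_sq hf hA h2)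

end StrictConvex

theorem stmt14 : ∃ K : ℝ, 0 < K ∧
    ∀ f : ℝ → ℝ, Continuous f → StrictConvexOn ℝ Set.univ f →
    ∀ A : Finset ℝ, 2 ≤ A.card →
    max ((A.image f + A.image f).card : ℝ) ((A + A).card : ℝ) ≥
      K * (A.card : ℝ) ^ ((24 : ℝ) / 19) / (Real.log A.card) ^ ((2 : ℝ) / 19) := by
  obtain ⟨K, hK, h⟩ := stmt14_general (𝕜 := ℝ) (β := ℝ)
  exact ⟨K, hK, fun f _ hf A h2 => h Set.univ f hf A (Set.subset_univ _) h2⟩
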